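/- For any training set S of points in X × {−1,1}, any probability distribution D over X × {−1,1}, any w ∈ H, and any margin γ ≥ γ_i (with k at least a sufficiently large constant and c_γ sufficiently small), the following four inequalities hold: (1) E_{A,t}[ Pr_{(x,y)∼D}[ y⟨h_{A,t}(w), Ax⟩ > γ_i/2 ∧ y⟨w,x⟩ ≤ 0 ] ] ≤ E_{(x,y)∼D}[φ(y⟨w,x⟩)]; (2) E_{A,t}[ Pr_{(x,y)∼S}[ y⟨h_{A,t}(w), Ax⟩ > γ_i/2 ∧ y⟨w,x⟩ ≤ γ ] ] ≥ E_{(x,y)∼S}[φ(y⟨w,x⟩)]; (3) E_{A,t}[ Pr_{(x,y)∼S}[ y⟨h_{A,t}(w), Ax⟩ ≤ γ_i/2 ∧ y⟨w,x⟩ > γ ] ] ≤ E_{(x,y)∼S}[ρ(y⟨w,x⟩)]; (4) E_{A,t}[ Pr_{(x,y)∼D}[ y⟨h_{A,t}(w), Ax⟩ ≤ γ_i/2 ∧ y⟨w,x⟩ > 0 ] ] ≥ E_{(x,y)∼D}[ρ(y⟨w,x⟩)]. -/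

import Mathlib

open MeasureTheory ProbabilityTheory

noncomputable section

/-- Dot product on `Fin m → ℝ`. -/
def dotp {m : ℕ} (w x : Fin m → ℝ) : ℝ := ∑ j, w j * x j

/-- Margin loss `L_D^γ(w)` of `w` under a distribution `D` on `ℝ^m × ℝ`
(labels are encoded as reals in `{-1,1}`). -/
def lossD {m : ℕ} (D : Measure ((Fin m → ℝ) × ℝ)) (γ : ℝ) (w : Fin m → ℝ) : ℝ :=
  (D {p | p.2 * dotp w p.1 ≤ γ}).toReal

/-- Empirical margin loss `L_S^γ(w)` on a training set `S` of `n` labeled points. -/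
def lossS {m n : ℕ} (S : Fin n → (Fin m → ℝ) × ℝ) (γ : ℝ) (w : Fin m → ℝ) : ℝ :=
  (Nat.card {i : Fin n // (S i).2 * dotp w (S i).1 ≤ γ} : ℝ) / n

/-- The i.i.d. sample measure `D^n` over training sets of size `n`. -/
def trainM {m : ℕ} (D : Measure ((Fin m → ℝ) × ℝ)) (n : ℕ) :
    Measure (Fin n → (Fin m → ℝ) × ℝ) := Measure.pi fun _ => D

/-- Spacing of the rounding grid: `(10 √k)⁻¹`. -/
def gridStep (k : ℕ) : ℝ := (10 * Real.sqrt k)⁻¹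

/-- The largest grid point `(1/2)(10√k)⁻¹ + z(10√k)⁻¹ ≤ g`. -/
def roundDown (k : ℕ) (g : ℝ) : ℝ :=
  gridStep k / 2 + (⌊(g - gridStep k / 2) / gridStep k⌋ : ℝ) * gridStep k

/-- The probability `p(z)` of rounding `g` down, chosen so the rounding is unbiased. -/
def roundProb (k : ℕ) (g : ℝ) : ℝ := 1 - (g - roundDown k g) / gridStep k

/-- Matrix-vector product, `(Aw)_i = ∑ j A i j * w j`. -/
def matVec {k m : ℕ} (A : Fin k → Fin m → ℝ) (w : Fin m → ℝ) : Fin k → ℝ :=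
  fun i => ∑ j, A i j * w j

/-- The randomized rounding `h_{A,t}(w)` of `Aw` to the grid. -/
def hRound {k m : ℕ} (A : Fin k → Fin m → ℝ) (t : Fin k → ℝ) (w : Fin m → ℝ) :
    Fin k → ℝ :=
  fun i => if t i ≤ roundProb k (matVec A w i)
    then roundDown k (matVec A w i)
    else roundDown k (matVec A w i) + gridStep k

/-- The joint law of `(A, t)`: `A` has i.i.d. `N(0,1/k)` entries and `t` has i.i.d.
uniform `[0,1]` coordinates, independent of `A`. -/
def roundMeasure (k m : ℕ) : Measure ((Fin k → Fin m → ℝ) × (Fin k → ℝ)) :=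
  (Measure.pi fun _ : Fin k => Measure.pi fun _ : Fin m =>
      gaussianReal 0 (k : NNReal)⁻¹).prod
    (Measure.pi fun _ : Fin k => volume.restrict (Set.Icc (0 : ℝ) 1))

/-- Reduced setup: the data domain `X ⊆ S^d ⊂ ℝ^{d+1}` of unit vectors whose first
`d` coordinates have norm at most `cγ`. -/
def Xset (d : ℕ) (cγ : ℝ) : Set (Fin (d+1) → ℝ) :=
  {x | (∑ j, x j ^ 2) = 1 ∧ (∑ j : Fin d, x j.castSucc ^ 2) ≤ cγ ^ 2}

/-- Reduced setup: the hypothesis class `H = S^{d-1} × {0} ⊂ ℝ^{d+1}`. -/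
def Hset (d : ℕ) : Set (Fin (d+1) → ℝ) :=
  {w | (∑ j, w j ^ 2) = 1 ∧ w (Fin.last d) = 0}

/-- `γ_i = 2^{i-1} n^{-1/2}`. -/
def γlo (n i : ℕ) : ℝ := 2 ^ (i - 1) / Real.sqrt n

/-- `γ_{i+1} = 2^i n^{-1/2}`. -/
def γhi (n i : ℕ) : ℝ := 2 ^ i / Real.sqrt n

/-- `ℓ_{j+1} = 2^j n^{-1}`. -/
def ellhi (n j : ℕ) : ℝ := 2 ^ j / n

/-- The interval `L_j`: `L_0 = [0, n⁻¹]`, and `L_j = (2^{j-1}/n, 2^j/n]` for `j ≥ 1`. -/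
def Lset (n j : ℕ) : Set ℝ :=
  if j = 0 then Set.Icc 0 (n : ℝ)⁻¹
  else Set.Ioc ((2 : ℝ) ^ (j - 1) / n) ((2 : ℝ) ^ j / n)

/-- Margin loss of `h ∈ ℝ^k` under the pushforward distribution `A·D`. -/
def kLossD {k m : ℕ} (D : Measure ((Fin m → ℝ) × ℝ)) (γ : ℝ) (h : Fin k → ℝ)
    (A : Fin k → Fin m → ℝ) : ℝ :=
  (D {q | q.2 * (∑ r, h r * ∑ s, A r s * q.1 s) ≤ γ}).toReal

/-- Empirical margin loss of `h ∈ ℝ^k` on the transformed training set `A·S`. -/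
def kLossS {k m n : ℕ} (S : Fin n → (Fin m → ℝ) × ℝ) (γ : ℝ) (h : Fin k → ℝ)
    (A : Fin k → Fin m → ℝ) : ℝ :=
  (Nat.card {i : Fin n // (S i).2 * (∑ r, h r * ∑ s, A r s * (S i).1 s) ≤ γ} : ℝ) / n

/-- Specification of the function `φ` from the paper, for margin parameter `γi`:
on `[-cγ, 0]` it equals the probability (over the randomized rounding) that the rounded
margin exceeds `γi/2` given original margin `α`; on `(0, γi]` it interpolates linearly to
`0`; on `(γi, cγ]` it is `0`. -/
def phiSpec (d k : ℕ) (cγ γi : ℝ) (φ : ℝ → ℝ) : Prop :=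
  (∀ (w x : Fin (d+1) → ℝ) (y : ℝ), w ∈ Hset d → x ∈ Xset d cγ →
      (y = 1 ∨ y = -1) → y * dotp w x ≤ 0 →
      φ (y * dotp w x) =
        (roundMeasure k (d+1)
          {p | γi / 2 < y * ∑ r, hRound p.1 p.2 w r * ∑ s, p.1 r s * x s}).toReal) ∧
  (∀ α : ℝ, 0 < α → α ≤ γi → φ α = ((γi - α) / γi) * φ 0) ∧
  (∀ α : ℝ, γi < α → α ≤ cγ → φ α = 0)

/-- Specification of the function `ρ` from the paper, for margin parameter `γi`. -/
def rhoSpec (d k : ℕ) (cγ γi : ℝ) (ρ : ℝ → ℝ) : Prop :=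
  (∀ (w x : Fin (d+1) → ℝ) (y : ℝ), w ∈ Hset d → x ∈ Xset d cγ →
      (y = 1 ∨ y = -1) → γi < y * dotp w x →
      ρ (y * dotp w x) =
        (roundMeasure k (d+1)
          {p | y * ∑ r, hRound p.1 p.2 w r * ∑ s, p.1 r s * x s ≤ γi / 2}).toReal) ∧
  (∀ α : ℝ, 0 < α → α ≤ γi →
      ∀ (w x : Fin (d+1) → ℝ) (y : ℝ), w ∈ Hset d → x ∈ Xset d cγ →
      (y = 1 ∨ y = -1) → y * dotp w x = γi →
      ρ α = (α / γi) *
        (roundMeasure k (d+1)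
          {p | y * ∑ r, hRound p.1 p.2 w r * ∑ s, p.1 r s * x s ≤ γi / 2}).toReal) ∧
  (∀ α : ℝ, -cγ ≤ α → α ≤ 0 → ρ α = 0)

/-!
Condition on `(Aw, t)` and write `g = Aw`, `h = h_{A,t}(w)`. For a point with margin `α`, the
component of `yx` orthogonal to `w` is mapped by `A` to a Gaussian vector independent of `g`, so the
rounded margin is normal with mean `α⟨h, g⟩` and variance `(1 - α²)‖h‖² / k`. Hence its distribution
depends on `α` only. Rounding moves `g` by at most `1/10`, so `⟨h, g⟩ ≥ ‖g‖² - ‖g‖/10`, and raising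
`α` makes a rounded margin at most `γ/2` less likely unless `‖g‖` is small. That happens with
exponentially small probability, so on `[0, γ]` the probability `L(α)` of a rounded margin at most
`γ/2` increases with slope at most `√k 2⁻ᵏ`. As `1 - L(0)` and `L(γ)` are both at least
`exp(-k/100 - 3)`, this slope is smaller than those of the linear interpolations defining `φ` and
`ρ` on `(0, γ]`, which gives `φ ≤ 1 - L` and `ρ ≤ L`. The four inequalities then follow by Fubini.
-/

open scoped Matrix

section GaussianVector

variable {ι κ : Type*} [Fintype ι] [Fintype κ] (σ : NNReal)

theorem hasLaw_eval_pi_gaussianReal (i : ι) :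
    HasLaw (fun a : ι → ℝ ↦ a i) (gaussianReal 0 σ) (Measure.pi fun _ ↦ gaussianReal 0 σ) :=
  (measurePreserving_eval (fun _ ↦ gaussianReal 0 σ) i).hasLaw

theorem iIndepFun_eval_pi_gaussianReal :
    iIndepFun (fun (i : ι) (a : ι → ℝ) ↦ a i) (Measure.pi fun _ ↦ gaussianReal 0 σ) :=
  iIndepFun_pi (X := fun _ ↦ id) fun _ ↦ aemeasurable_id

theorem hasGaussianLaw_dotProduct_prodMk (v u : ι → ℝ) :
    HasGaussianLaw (fun a ↦ (v ⬝ᵥ a, u ⬝ᵥ a)) (Measure.pi fun _ : ι ↦ gaussianReal 0 σ) :=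
  ((iIndepFun_eval_pi_gaussianReal σ).hasGaussianLaw fun i ↦
    (hasLaw_eval_pi_gaussianReal σ i).hasGaussianLaw).map_fun
      ((dotProductBilin ℝ ℝ v).prod (dotProductBilin ℝ ℝ u)).toContinuousLinearMap

theorem covariance_dotProduct_pi_gaussianReal (v u : ι → ℝ) :
    cov[fun a ↦ v ⬝ᵥ a, fun a ↦ u ⬝ᵥ a; Measure.pi fun _ : ι ↦ gaussianReal 0 σ] =
      σ * (v ⬝ᵥ u) := by
  classical
  have hmem (i : ι) : MemLp (fun a : ι → ℝ ↦ a i) 2 (Measure.pi fun _ ↦ gaussianReal 0 σ) :=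
    (hasLaw_eval_pi_gaussianReal σ i).hasGaussianLaw.memLp_two
  have hcov (i j : ι) : cov[fun a ↦ a i, fun a ↦ a j; Measure.pi fun _ : ι ↦ gaussianReal 0 σ] =
      if i = j then (σ : ℝ) else 0 := by
    split_ifs with h
    · rw [h, covariance_self (hmem j).aemeasurable, (hasLaw_eval_pi_gaussianReal σ j).variance_eq,
        variance_id_gaussianReal]
    · exact ((iIndepFun_eval_pi_gaussianReal σ).indepFun h).covariance_eq_zero (hmem i) (hmem j)
  simp only [dotProduct]
  rw [covariance_fun_sum_fun_sum (fun i ↦ (hmem i).const_mul _) fun j ↦ (hmem j).const_mul _]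
  simp only [covariance_const_mul_left, covariance_const_mul_right, hcov, mul_ite, mul_zero,
    Finset.sum_ite_eq, Finset.mem_univ, if_true, Finset.mul_sum]
  exact Finset.sum_congr rfl fun i _ ↦ by ring

theorem integral_dotProduct_pi_gaussianReal (v : ι → ℝ) :
    ∫ a, v ⬝ᵥ a ∂(Measure.pi fun _ : ι ↦ gaussianReal 0 σ) = 0 := by
  simp only [dotProduct]
  rw [integral_finsetSum _ fun i _ ↦
    (hasLaw_eval_pi_gaussianReal σ i).hasGaussianLaw.integrable.const_mul _]
  simp only [integral_const_mul, (hasLaw_eval_pi_gaussianReal σ _).integral_eq,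
    integral_id_gaussianReal, mul_zero, Finset.sum_const_zero]

theorem measurePreserving_dotProduct (v : ι → ℝ) :
    MeasurePreserving (v ⬝ᵥ ·) (Measure.pi fun _ : ι ↦ gaussianReal 0 σ)
      (gaussianReal 0 (σ * (v ⬝ᵥ v).toNNReal)) := by
  have hlaw := (hasGaussianLaw_dotProduct_prodMk σ v v).fst
  have hvar : (σ * (v ⬝ᵥ v)).toNNReal = σ * (v ⬝ᵥ v).toNNReal := by
    rw [Real.toNNReal_mul σ.coe_nonneg, Real.toNNReal_coe]
  refine ⟨by unfold dotProduct; fun_prop, ?_⟩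
  rw [hlaw.map_eq_gaussianReal, integral_dotProduct_pi_gaussianReal,
    ← covariance_self hlaw.aemeasurable, covariance_dotProduct_pi_gaussianReal, hvar]

theorem measurePreserving_dotProduct_prodMk {v u : ι → ℝ} (h : v ⬝ᵥ u = 0) :
    MeasurePreserving (fun a ↦ (v ⬝ᵥ a, u ⬝ᵥ a)) (Measure.pi fun _ : ι ↦ gaussianReal 0 σ)
      ((gaussianReal 0 (σ * (v ⬝ᵥ v).toNNReal)).prod
        (gaussianReal 0 (σ * (u ⬝ᵥ u).toNNReal))) := by
  have hlaw := hasGaussianLaw_dotProduct_prodMk σ v u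
  have hindep := hlaw.indepFun_of_covariance_eq_zero <| by
    rw [covariance_dotProduct_pi_gaussianReal, h, mul_zero]
  have hv := measurePreserving_dotProduct σ v
  have hu := measurePreserving_dotProduct σ u
  refine ⟨hv.measurable.prodMk hu.measurable, ?_⟩
  rw [(indepFun_iff_map_prod_eq_prod_map_map hlaw.fst.aemeasurable hlaw.snd.aemeasurable).1 hindep,
    hv.map_eq, hu.map_eq]

theorem measurePreserving_mulVec_prodMk {v u : ι → ℝ} (h : v ⬝ᵥ u = 0) :
    MeasurePreserving (fun A : κ → ι → ℝ ↦ (Matrix.mulVec A v, Matrix.mulVec A u))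
      (Measure.pi fun _ : κ ↦ Measure.pi fun _ : ι ↦ gaussianReal 0 σ)
      ((Measure.pi fun _ : κ ↦ gaussianReal 0 (σ * (v ⬝ᵥ v).toNNReal)).prod
        (Measure.pi fun _ : κ ↦ gaussianReal 0 (σ * (u ⬝ᵥ u).toNNReal))) := by
  convert (measurePreserving_arrowProdEquivProdArrow ℝ ℝ κ _ _).comp
    (measurePreserving_pi _ _ fun _ : κ ↦ measurePreserving_dotProduct_prodMk σ h) using 1
  funext A
  exact Prod.ext (funext fun i ↦ dotProduct_comm _ _) (funext fun i ↦ dotProduct_comm _ _)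

end GaussianVector

local notation "Φ" => cdf (gaussianReal 0 1)

theorem measureReal_dotProduct_le_pi_gaussianReal {ι : Type*} [Fintype ι] {τ : NNReal} {h : ι → ℝ}
    (hpos : 0 < τ * (h ⬝ᵥ h)) (c : ℝ) :
    (Measure.pi fun _ : ι ↦ gaussianReal 0 τ).real {b | h ⬝ᵥ b ≤ c} =
      Φ (c / √(τ * (h ⬝ᵥ h))) := by
  set s := √(τ * (h ⬝ᵥ h)) with hs
  have hs0 : 0 < s := Real.sqrt_pos.2 hpos
  have hvar : τ * (h ⬝ᵥ h).toNNReal / .mk (s ^ 2) (sq_nonneg s) = 1 := by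
    rw [div_eq_one_iff_eq (by simpa [← NNReal.coe_ne_zero] using hs0.ne')]
    ext
    have hnonneg : 0 ≤ h ⬝ᵥ h := dotProduct_self_star_nonneg h
    simp only [NNReal.coe_mul, Real.coe_toNNReal _ hnonneg, NNReal.coe_mk, hs,
      Real.sq_sqrt hpos.le]
  have hmp := measurePreserving_dotProduct τ h
  have hlaw : HasLaw (fun b ↦ h ⬝ᵥ b / s) (gaussianReal 0 1)
      (Measure.pi fun _ : ι ↦ gaussianReal 0 τ) := by
    have := gaussianReal_div_const hmp.hasLaw s
    rwa [zero_div, hvar] at this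
  calc _ = (Measure.pi fun _ ↦ gaussianReal 0 τ).real {b | h ⬝ᵥ b / s ≤ c / s} := by
        simp only [div_le_div_iff_of_pos_right hs0]
    _ = Φ (c / s) := by
        rw [cdf_eq_real]
        exact hlaw.measureReal_eq measurableSet_Iic

theorem cdf_gaussianReal_sub (μ : ℝ) {v : NNReal} (hv : v ≠ 0) {a b : ℝ} (hab : a ≤ b) :
    cdf (gaussianReal μ v) b - cdf (gaussianReal μ v) a =
      ∫ x in Set.Ioc a b, gaussianPDFReal μ v x := by
  rw [cdf_eq_real, cdf_eq_real, ← Set.Iic_union_Ioc_eq_Iic hab,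
    measureReal_union (Set.Iic_disjoint_Ioc le_rfl) measurableSet_Ioc, add_sub_cancel_left,
    measureReal_def, gaussianReal_apply_eq_integral _ hv, ENNReal.toReal_ofReal]
  exact integral_nonneg fun x ↦ gaussianPDFReal_nonneg _ _ _

theorem gaussianPDFReal_zero_one (x : ℝ) :
    gaussianPDFReal 0 1 x = (√(2 * Real.pi))⁻¹ * Real.exp (-x ^ 2 / 2) := by
  simp [gaussianPDFReal]

theorem gaussianPDFReal_zero_one_le_one (x : ℝ) : gaussianPDFReal 0 1 x ≤ 1 := by
  rw [gaussianPDFReal_zero_one]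
  refine mul_le_one₀ (inv_le_one_of_one_le₀ (Real.one_le_sqrt.2 ?_)) (Real.exp_pos _).le
    (Real.exp_le_one_iff.2 (by linarith [sq_nonneg x]))
  linarith [Real.pi_gt_three]

theorem exp_le_gaussianPDFReal_zero_one {u x : ℝ} (hx : |x| ≤ u + 1) :
    Real.exp (-u ^ 2 - 3) ≤ gaussianPDFReal 0 1 x := by
  have hx2 : x ^ 2 ≤ (u + 1) ^ 2 := sq_le_sq.2 (hx.trans (le_abs_self _))
  have hconst : Real.exp (-2) ≤ (√(2 * Real.pi))⁻¹ := by
    rw [Real.exp_neg]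
    refine inv_anti₀ (by positivity) (Real.sqrt_le_iff.2 ⟨(Real.exp_pos _).le, ?_⟩)
    nlinarith [Real.pi_lt_four, Real.add_one_le_exp (2 : ℝ)]
  rw [gaussianPDFReal_zero_one, show -u ^ 2 - 3 = -2 + (-u ^ 2 - 1) by ring, Real.exp_add]
  refine mul_le_mul hconst (Real.exp_le_exp.2 ?_) (Real.exp_pos _).le (by positivity)
  linarith [sq_nonneg (u - 1)]

theorem gaussianCdf_sub_le_max (a b : ℝ) : Φ b - Φ a ≤ max (b - a) 0 := by
  rcases le_total a b with hab | hba
  · refine le_max_of_le_left ?_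
    calc Φ b - Φ a = ∫ x in Set.Ioc a b, gaussianPDFReal 0 1 x :=
          cdf_gaussianReal_sub 0 one_ne_zero hab
      _ ≤ ∫ _ in Set.Ioc a b, (1 : ℝ) :=
          setIntegral_mono (integrable_gaussianPDFReal _ _).integrableOn
            (integrableOn_const (by simp)) gaussianPDFReal_zero_one_le_one
      _ = b - a := by simp [hab]
  · exact le_max_of_le_right (sub_nonpos.2 (monotone_cdf _ hba))

theorem exp_le_gaussianCdf_add_one_sub {u a : ℝ} (h : ∀ x ∈ Set.Ioc a (a + 1), |x| ≤ u + 1) :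
    Real.exp (-u ^ 2 - 3) ≤ Φ (a + 1) - Φ a := by
  rw [cdf_gaussianReal_sub 0 one_ne_zero (by linarith)]
  calc Real.exp (-u ^ 2 - 3) = ∫ _ in Set.Ioc a (a + 1), Real.exp (-u ^ 2 - 3) := by simp
    _ ≤ _ := setIntegral_mono_on (integrableOn_const (by simp))
        (integrable_gaussianPDFReal _ _).integrableOn measurableSet_Ioc
        fun x hx ↦ exp_le_gaussianPDFReal_zero_one (h x hx)

theorem exp_le_one_sub_gaussianCdf {u : ℝ} (hu : 0 ≤ u) : Real.exp (-u ^ 2 - 3) ≤ 1 - Φ u :=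
  (exp_le_gaussianCdf_add_one_sub fun x hx ↦ abs_le.2 ⟨by linarith [hx.1], hx.2⟩).trans
    (sub_le_sub_right (cdf_le_one _ _) _)

theorem exp_le_gaussianCdf_neg {u : ℝ} (hu : 0 ≤ u) : Real.exp (-u ^ 2 - 3) ≤ Φ (-u) := by
  have h := exp_le_gaussianCdf_add_one_sub (u := u) (a := -u - 1) fun x hx ↦
    abs_le.2 ⟨by linarith [hx.1], by linarith [hx.2]⟩
  rw [sub_add_cancel] at h
  exact h.trans (sub_le_self _ (cdf_nonneg _ _))

theorem integral_exp_neg_mul_sq_gaussianReal (v : NNReal) {c : ℝ} (hc : 0 ≤ c) :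
    ∫ x, Real.exp (-c * x ^ 2) ∂(gaussianReal 0 v) = (√(1 + 2 * c * v))⁻¹ := by
  rcases eq_or_ne v 0 with rfl | hv
  · simp
  have : (0 : ℝ) < v := by positivity
  have hdensity (x : ℝ) : gaussianPDFReal 0 v x • Real.exp (-c * x ^ 2) =
      (√(2 * Real.pi * v))⁻¹ * Real.exp (-(c + 1 / (2 * v)) * x ^ 2) := by
    simp only [gaussianPDFReal, smul_eq_mul, mul_assoc, ← Real.exp_add]
    congr 2
    field_simp
    ring
  simp_rw [integral_gaussianReal_eq_integral_smul hv, hdensity]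
  rw [integral_const_mul, integral_gaussian, ← Real.sqrt_inv, ← Real.sqrt_inv,
    ← Real.sqrt_mul (by positivity)]
  congr 1
  field_simp
  ring

theorem integral_exp_neg_mul_dotProduct_self {ι : Type*} [Fintype ι] (v : NNReal) {c : ℝ}
    (hc : 0 ≤ c) :
    ∫ g, Real.exp (-c * (g ⬝ᵥ g)) ∂(Measure.pi fun _ : ι ↦ gaussianReal 0 v) =
      (√(1 + 2 * c * v))⁻¹ ^ Fintype.card ι := by
  simp only [dotProduct, ← pow_two, Finset.mul_sum, Real.exp_sum]
  rw [integral_fintype_prod_eq_pow fun x : ℝ ↦ Real.exp (-c * x ^ 2),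
    integral_exp_neg_mul_sq_gaussianReal v hc]

theorem abs_dotProduct_le_sqrt_mul_sqrt {ι : Type*} [Fintype ι] (v u : ι → ℝ) :
    |v ⬝ᵥ u| ≤ √(v ⬝ᵥ v) * √(u ⬝ᵥ u) := by
  have hv : 0 ≤ v ⬝ᵥ v := dotProduct_self_star_nonneg v
  rw [← Real.sqrt_mul hv]
  refine Real.abs_le_sqrt ?_
  simpa only [dotProduct, pow_two] using Finset.sum_mul_sq_le_sq_mul_sq Finset.univ v u

section Rounding

variable {k : ℕ}

/-- Randomized rounding of a vector `g` to the grid, with random seed `t`: the rounding `hRound` of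
`Aw` as a function of `Aw` alone. -/
def roundVec (g t : Fin k → ℝ) : Fin k → ℝ :=
  fun i ↦ if t i ≤ roundProb k (g i) then roundDown k (g i) else roundDown k (g i) + gridStep k

theorem measurable_roundDown : Measurable (roundDown k) := by
  unfold roundDown
  fun_prop

theorem measurable_roundProb : Measurable (roundProb k) :=
  measurable_const.sub ((measurable_id.sub measurable_roundDown).div_const _)

theorem measurable_roundVec :
    Measurable fun p : (Fin k → ℝ) × (Fin k → ℝ) ↦ roundVec p.1 p.2 := by
  refine measurable_pi_lambda _ fun i ↦ ?_
  have hg : Measurable fun p : (Fin k → ℝ) × (Fin k → ℝ) ↦ p.1 i := by fun_prop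
  exact Measurable.ite (measurableSet_le (by fun_prop) (measurable_roundProb.comp hg))
    (measurable_roundDown.comp hg) ((measurable_roundDown.comp hg).add_const _)

theorem gridStep_pos (hk : 0 < k) : 0 < gridStep k := by
  unfold gridStep
  positivity

theorem natCast_mul_gridStep_sq (hk : 0 < k) : k * gridStep k ^ 2 = 1 / 100 := by
  rw [gridStep, inv_pow, mul_pow, Real.sq_sqrt k.cast_nonneg]
  field_simp
  norm_num

theorem roundDown_le (hk : 0 < k) (x : ℝ) : roundDown k x ≤ x := by
  have h := (le_div_iff₀ (gridStep_pos hk)).1 (Int.floor_le ((x - gridStep k / 2) / gridStep k))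
  unfold roundDown
  linarith

theorem lt_roundDown_add_gridStep (hk : 0 < k) (x : ℝ) : x < roundDown k x + gridStep k := by
  have h := (div_lt_iff₀ (gridStep_pos hk)).1
    (Int.lt_floor_add_one ((x - gridStep k / 2) / gridStep k))
  unfold roundDown
  linarith

theorem abs_roundVec_sub_le (hk : 0 < k) (g t : Fin k → ℝ) (i : Fin k) :
    |roundVec g t i - g i| ≤ gridStep k := by
  have hstep := gridStep_pos hk
  have hle := roundDown_le hk (g i)
  have hlt := lt_roundDown_add_gridStep hk (g i)
  unfold roundVec
  split_ifs <;> exact abs_le.2 ⟨by linarith, by linarith⟩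

theorem half_le_abs_half_add_intCast_mul (s : ℝ) (z : ℤ) : |s / 2| ≤ |s / 2 + z * s| := by
  have hz : (0 : ℝ) ≤ z * (z + 1) := by
    rcases le_or_gt 0 z with h | h
    · positivity
    · have : (z : ℝ) + 1 ≤ 0 := by exact_mod_cast h
      nlinarith
  exact sq_le_sq.1 (by linarith [mul_nonneg (sq_nonneg s) hz])

theorem half_gridStep_le_abs_roundVec (g t : Fin k → ℝ) (i : Fin k) :
    |gridStep k / 2| ≤ |roundVec g t i| := by
  unfold roundVec roundDown
  split_ifs
  · exact half_le_abs_half_add_intCast_mul _ _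
  · convert half_le_abs_half_add_intCast_mul (gridStep k)
      (⌊(g i - gridStep k / 2) / gridStep k⌋ + 1) using 2
    push_cast
    ring

theorem dotProduct_self_roundVec_sub_le (hk : 0 < k) (g t : Fin k → ℝ) :
    (roundVec g t - g) ⬝ᵥ (roundVec g t - g) ≤ 1 / 100 := by
  calc (roundVec g t - g) ⬝ᵥ (roundVec g t - g) ≤ ∑ _i : Fin k, gridStep k ^ 2 := by
        refine Finset.sum_le_sum fun i _ ↦ ?_
        rw [← pow_two]
        exact sq_le_sq.2 ((abs_roundVec_sub_le hk g t i).trans (le_abs_self _))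
    _ = 1 / 100 := by simp [natCast_mul_gridStep_sq hk]

/-- The grid is offset by half a step, which keeps every coordinate of the rounding away from `0`.
-/
theorem le_dotProduct_self_roundVec (hk : 0 < k) (g t : Fin k → ℝ) :
    1 / 400 ≤ roundVec g t ⬝ᵥ roundVec g t := by
  calc (1 / 400 : ℝ) = ∑ _i : Fin k, (gridStep k / 2) ^ 2 := by
        rw [Finset.sum_const, Finset.card_univ, Fintype.card_fin, nsmul_eq_mul, div_pow,
          ← mul_div_assoc, natCast_mul_gridStep_sq hk]
        norm_num
    _ ≤ roundVec g t ⬝ᵥ roundVec g t := by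
        refine Finset.sum_le_sum fun i _ ↦ ?_
        rw [← pow_two]
        exact sq_le_sq.2 (half_gridStep_le_abs_roundVec g t i)

theorem dotProduct_self_sub_le_roundVec_dotProduct (hk : 0 < k) (g t : Fin k → ℝ) :
    g ⬝ᵥ g - √(g ⬝ᵥ g) / 10 ≤ roundVec g t ⬝ᵥ g := by
  have herr : √((roundVec g t - g) ⬝ᵥ (roundVec g t - g)) ≤ 1 / 10 :=
    Real.sqrt_le_iff.2 ⟨by norm_num, (dotProduct_self_roundVec_sub_le hk g t).trans (by norm_num)⟩
  have hcs := neg_le_of_abs_le (abs_dotProduct_le_sqrt_mul_sqrt (roundVec g t - g) g)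
  have hsplit : roundVec g t ⬝ᵥ g = g ⬝ᵥ g + (roundVec g t - g) ⬝ᵥ g := by
    rw [sub_dotProduct, add_sub_cancel]
  nlinarith [Real.sqrt_nonneg (g ⬝ᵥ g)]

end Rounding

section ProductMeasure

variable {α β : Type*} [MeasurableSpace α] [MeasurableSpace β] (μ : Measure α) (ν : Measure β)
  {E : Set (α × β)}

theorem measureReal_prod_eq_integral [IsFiniteMeasure ν] (hE : MeasurableSet E) :
    (μ.prod ν).real E = ∫ x, ν.real {y | (x, y) ∈ E} ∂μ := by
  rw [measureReal_def, Measure.prod_apply hE]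
  exact (integral_toReal (measurable_measure_prodMk_left hE).aemeasurable
    (.of_forall fun _ ↦ measure_lt_top _ _)).symm

theorem measureReal_prod_eq_integral_symm [IsFiniteMeasure μ] [SFinite ν] (hE : MeasurableSet E) :
    (μ.prod ν).real E = ∫ y, μ.real {x | (x, y) ∈ E} ∂ν := by
  rw [measureReal_def, Measure.prod_apply_symm hE]
  exact (integral_toReal (measurable_measure_prodMk_right hE).aemeasurable
    (.of_forall fun _ ↦ measure_lt_top _ _)).symm

theorem integral_measureReal_section_comm [IsFiniteMeasure μ] [IsFiniteMeasure ν]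
    (hE : MeasurableSet E) :
    ∫ x, ν.real {y | (x, y) ∈ E} ∂μ = ∫ y, μ.real {x | (x, y) ∈ E} ∂ν :=
  (measureReal_prod_eq_integral μ ν hE).symm.trans (measureReal_prod_eq_integral_symm μ ν hE)

theorem integral_measureReal_section_and [IsFiniteMeasure μ] [IsFiniteMeasure ν]
    (hE : MeasurableSet E) (B : Set β) :
    ∫ x, ν.real {y | (x, y) ∈ E ∧ y ∈ B} ∂μ = ∫ y in B, μ.real {x | (x, y) ∈ E} ∂ν := by
  rw [← integral_measureReal_section_comm μ (ν.restrict B) hE]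
  refine integral_congr_ae (.of_forall fun x ↦ ?_)
  exact (measureReal_restrict_apply (measurable_prodMk_left hE)).symm

end ProductMeasure

section RoundedMargin

instance isProbabilityMeasure_volume_restrict_unitInterval :
    IsProbabilityMeasure (volume.restrict (Set.Icc (0 : ℝ) 1)) :=
  ⟨by simp⟩

instance isProbabilityMeasure_roundMeasure (k m : ℕ) : IsProbabilityMeasure (roundMeasure k m) := by
  unfold roundMeasure
  infer_instance

/-- The joint law of the projection `Aw` of a unit vector `w` and of the rounding seeds `t`. -/
def projMeasure (k : ℕ) : Measure ((Fin k → ℝ) × (Fin k → ℝ)) :=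
  (Measure.pi fun _ : Fin k ↦ gaussianReal 0 (k : NNReal)⁻¹).prod
    (Measure.pi fun _ : Fin k ↦ volume.restrict (Set.Icc (0 : ℝ) 1))

instance isProbabilityMeasure_projMeasure (k : ℕ) : IsProbabilityMeasure (projMeasure k) := by
  unfold projMeasure
  infer_instance

/-- The margin `y⟨w, x⟩` of `w` on the labelled point `q = (x, y)`. -/
def margin {m : ℕ} (w : Fin m → ℝ) (q : (Fin m → ℝ) × ℝ) : ℝ := q.2 * dotp w q.1

/-- The margin `y⟨h_{A,t}(w), Ax⟩` of the rounded hypothesis on the labelled point `q = (x, y)`,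
where `p = (A, t)`. -/
def roundedMargin {k m : ℕ} (w : Fin m → ℝ) (q : (Fin m → ℝ) × ℝ)
    (p : (Fin k → Fin m → ℝ) × (Fin k → ℝ)) : ℝ :=
  q.2 * ∑ r, hRound p.1 p.2 w r * ∑ s, p.1 r s * q.1 s

/-- Given `p = (Aw, t)` and the margin `α` of a labelled point `(x, y)`, the rounded margin is at
most `γ / 2` exactly if a certain standard Gaussian variable is at most this number. -/
def threshold {k : ℕ} (γ α : ℝ) (p : (Fin k → ℝ) × (Fin k → ℝ)) : ℝ :=
  (γ / 2 - α * (roundVec p.1 p.2 ⬝ᵥ p.1)) /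
    √((k : ℝ)⁻¹ * (1 - α ^ 2) * (roundVec p.1 p.2 ⬝ᵥ roundVec p.1 p.2))

/-- The probability that the rounded margin of a point with margin `α` is at most `γ / 2`. -/
def roundedLoss (k : ℕ) (γ α : ℝ) : ℝ :=
  ∫ p, Φ (threshold γ α p) ∂(projMeasure k)

variable {k m : ℕ}

theorem measurePreserving_proj_prodMk {w u : Fin m → ℝ} (hw : w ⬝ᵥ w = 1) (hwu : w ⬝ᵥ u = 0) :
    MeasurePreserving (fun p : (Fin k → Fin m → ℝ) × (Fin k → ℝ) ↦
        ((matVec p.1 w, p.2), matVec p.1 u))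
      (roundMeasure k m)
      ((projMeasure k).prod
        (Measure.pi fun _ ↦ gaussianReal 0 ((k : NNReal)⁻¹ * (u ⬝ᵥ u).toNNReal))) := by
  have hA := measurePreserving_mulVec_prodMk (κ := Fin k) (k : NNReal)⁻¹ hwu
  rw [hw, Real.toNNReal_one, mul_one] at hA
  exact ((measurePreserving_prodAssoc _ _ _).symm _).comp <|
    ((MeasurePreserving.id _).prod Measure.measurePreserving_swap).comp <|
    (measurePreserving_prodAssoc _ _ _).comp (hA.prod (.id _))

theorem roundedMargin_eq (w : Fin m → ℝ) (q : (Fin m → ℝ) × ℝ)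
    (p : (Fin k → Fin m → ℝ) × (Fin k → ℝ)) :
    roundedMargin w q p = q.2 * (roundVec (matVec p.1 w) p.2 ⬝ᵥ matVec p.1 q.1) := rfl

theorem measurable_margin (w : Fin m → ℝ) : Measurable (margin w) := by
  unfold margin dotp
  fun_prop

theorem measurable_uncurry_roundedMargin (w : Fin m → ℝ) :
    Measurable fun z : ((Fin k → Fin m → ℝ) × (Fin k → ℝ)) × ((Fin m → ℝ) × ℝ) ↦
      roundedMargin w z.2 z.1 := by
  have hh : Measurable fun z : ((Fin k → Fin m → ℝ) × (Fin k → ℝ)) × ((Fin m → ℝ) × ℝ) ↦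
      hRound z.1.1 z.1.2 w := by
    have hAw : Measurable fun z : ((Fin k → Fin m → ℝ) × (Fin k → ℝ)) × ((Fin m → ℝ) × ℝ) ↦
        (matVec z.1.1 w, z.1.2) := by
      unfold matVec
      fun_prop
    exact measurable_roundVec.comp hAw
  unfold roundedMargin
  fun_prop

theorem measurable_roundedMargin (w : Fin m → ℝ) (q : (Fin m → ℝ) × ℝ) :
    Measurable (roundedMargin (k := k) w q) :=
  (measurable_uncurry_roundedMargin w).comp measurable_prodMk_right

theorem matVec_smul_sub_smul (A : Fin k → Fin m → ℝ) (x w : Fin m → ℝ) (y α : ℝ) :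
    matVec A (y • x - α • w) = y • matVec A x - α • matVec A w :=
  (Matrix.mulVec_sub (Matrix.of A) _ _).trans <|
    congrArg₂ (· - ·) (Matrix.mulVec_smul (Matrix.of A) y x) (Matrix.mulVec_smul (Matrix.of A) α w)

theorem measurableSet_roundVec_dotProduct_le (c α : ℝ) :
    MeasurableSet {z : ((Fin k → ℝ) × (Fin k → ℝ)) × (Fin k → ℝ) |
      roundVec z.1.1 z.1.2 ⬝ᵥ z.2 ≤ c - α * (roundVec z.1.1 z.1.2 ⬝ᵥ z.1.1)} := by
  have hh : Measurable fun z : ((Fin k → ℝ) × (Fin k → ℝ)) × (Fin k → ℝ) ↦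
      roundVec z.1.1 z.1.2 := measurable_roundVec.comp measurable_fst
  unfold dotProduct
  exact measurableSet_le (by fun_prop) (by fun_prop)

theorem measureReal_roundVec_dotProduct_le (hk : 0 < k) {α : ℝ} (hα : α ^ 2 < 1) {τ : NNReal}
    (hτ : (τ : ℝ) = (k : ℝ)⁻¹ * (1 - α ^ 2)) {γ : ℝ} (p : (Fin k → ℝ) × (Fin k → ℝ)) :
    (Measure.pi fun _ ↦ gaussianReal 0 τ).real
        {b | roundVec p.1 p.2 ⬝ᵥ b ≤ γ / 2 - α * (roundVec p.1 p.2 ⬝ᵥ p.1)} =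
      Φ (threshold γ α p) := by
  have hh := le_dotProduct_self_roundVec hk p.1 p.2
  have hpos : 0 < τ * (roundVec p.1 p.2 ⬝ᵥ roundVec p.1 p.2) := by
    have : 0 < 1 - α ^ 2 := sub_pos.2 hα
    rw [hτ]
    positivity
  rw [measureReal_dotProduct_le_pi_gaussianReal hpos, hτ, threshold]

theorem measureReal_roundedMargin_le (hk : 0 < k) {w : Fin m → ℝ} (hw : w ⬝ᵥ w = 1)
    {q : (Fin m → ℝ) × ℝ} (hx : q.1 ⬝ᵥ q.1 = 1) (hy : q.2 ^ 2 = 1) (hα : margin w q ^ 2 < 1)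
    (γ : ℝ) :
    (roundMeasure k m).real {p | roundedMargin w q p ≤ γ / 2} = roundedLoss k γ (margin w q) := by
  set α := margin w q
  set u : Fin m → ℝ := q.2 • q.1 - α • w with hu
  have hwx : q.2 * (w ⬝ᵥ q.1) = α := rfl
  have hwu : w ⬝ᵥ u = 0 := by
    simp only [hu, dotProduct_sub, dotProduct_smul, hw, smul_eq_mul, hwx, mul_one, sub_self]
  have huu : u ⬝ᵥ u = 1 - α ^ 2 := by
    simp only [hu, dotProduct_sub, sub_dotProduct, dotProduct_smul, smul_dotProduct, hw, hx,
      smul_eq_mul, dotProduct_comm q.1 w]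
    linear_combination hy - 2 * α * hwx
  have hsplit (p : (Fin k → Fin m → ℝ) × (Fin k → ℝ)) : roundedMargin w q p =
      roundVec (matVec p.1 w) p.2 ⬝ᵥ matVec p.1 u +
        α * (roundVec (matVec p.1 w) p.2 ⬝ᵥ matVec p.1 w) := by
    rw [roundedMargin_eq, hu, matVec_smul_sub_smul, dotProduct_sub, dotProduct_smul,
      dotProduct_smul, smul_eq_mul, smul_eq_mul, sub_add_cancel]
  have hmp := measurePreserving_proj_prodMk (k := k) hw hwu
  have hE := measurableSet_roundVec_dotProduct_le (k := k) (γ / 2) α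
  calc (roundMeasure k m).real {p | roundedMargin w q p ≤ γ / 2}
      = ((projMeasure k).prod (Measure.pi fun _ ↦ gaussianReal 0
          ((k : NNReal)⁻¹ * (u ⬝ᵥ u).toNNReal))).real {z | roundVec z.1.1 z.1.2 ⬝ᵥ z.2 ≤
            γ / 2 - α * (roundVec z.1.1 z.1.2 ⬝ᵥ z.1.1)} := by
        rw [← hmp.measureReal_preimage hE.nullMeasurableSet]
        simp only [hsplit, Set.preimage_ofPred_eq, le_sub_iff_add_le]
    _ = roundedLoss k γ α := by
        rw [measureReal_prod_eq_integral _ _ hE, roundedLoss]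
        refine integral_congr_ae (.of_forall fun p ↦ measureReal_roundVec_dotProduct_le hk hα ?_ p)
        rw [NNReal.coe_mul, NNReal.coe_inv, NNReal.coe_natCast, huu,
          Real.coe_toNNReal _ (sub_nonneg.2 hα.le)]

end RoundedMargin

theorem hasDerivAt_sub_mul_div_sqrt_one_sub_sq (a b : ℝ) {x : ℝ} (hx : x ^ 2 < 1) :
    HasDerivAt (fun x ↦ (b - x * a) / √(1 - x ^ 2)) ((x * b - a) / √(1 - x ^ 2) ^ 3) x := by
  have hpos : 0 < 1 - x ^ 2 := sub_pos.2 hx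
  have hs : √(1 - x ^ 2) ≠ 0 := (Real.sqrt_pos.2 hpos).ne'
  have hsq : √(1 - x ^ 2) ^ 2 = 1 - x ^ 2 := Real.sq_sqrt hpos.le
  have hnum : HasDerivAt (fun x : ℝ ↦ b - x * a) (-(1 * a)) x :=
    ((hasDerivAt_id x).mul_const a).const_sub b
  have hden : HasDerivAt (fun x : ℝ ↦ √(1 - x ^ 2)) (-(2 * x) / (2 * √(1 - x ^ 2))) x := by
    have h : HasDerivAt (fun x : ℝ ↦ 1 - x ^ 2) (-(2 * x)) x := by
      simpa using (hasDerivAt_pow 2 x).const_sub 1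
    exact h.sqrt hpos.ne'
  refine (hnum.div hden hs).congr_deriv ?_
  field_simp
  rw [hsq]
  ring

theorem sub_mul_div_sqrt_one_sub_sq_sub_le {a b C s α β : ℝ} (hα : 0 ≤ α) (hαβ : α ≤ β)
    (hβ : β ≤ s) (hs : s < 1)
    (hC : ∀ x ∈ Set.Icc 0 s, (x * b - a) / √(1 - x ^ 2) ^ 3 ≤ C) :
    (b - β * a) / √(1 - β ^ 2) - (b - α * a) / √(1 - α ^ 2) ≤ C * (β - α) := by
  have hderiv (x : ℝ) (hx : x ∈ Set.Icc 0 s) :=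
    hasDerivAt_sub_mul_div_sqrt_one_sub_sq a b (x := x)
      (by nlinarith [hx.1, hx.2])
  refine (convex_Icc 0 s).image_sub_le_mul_sub_of_deriv_le
    (fun x hx ↦ (hderiv x hx).continuousAt.continuousWithinAt)
    (fun x hx ↦ (hderiv x (interior_subset hx)).differentiableAt.differentiableWithinAt)
    (fun x hx ↦ ?_) α ⟨hα, hαβ.trans hβ⟩ β ⟨hα.trans hαβ, hβ⟩ hαβ
  rw [(hderiv x (interior_subset hx)).deriv]
  exact hC x (interior_subset hx)

section Threshold

variable {k : ℕ} {γ α β : ℝ}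

theorem threshold_eq (hk : 0 < k) (hα : α ^ 2 < 1) (γ : ℝ) (p : (Fin k → ℝ) × (Fin k → ℝ)) :
    threshold γ α p = √k / √(roundVec p.1 p.2 ⬝ᵥ roundVec p.1 p.2) *
      ((γ / 2 - α * (roundVec p.1 p.2 ⬝ᵥ p.1)) / √(1 - α ^ 2)) := by
  rw [threshold, Real.sqrt_mul (by have := sub_pos.2 hα; positivity),
    Real.sqrt_mul (by positivity), Real.sqrt_inv]
  have : √(k : ℝ) ≠ 0 := by positivity
  field_simp

theorem sqrt_dotProduct_self_roundVec_ge (hk : 0 < k) (g t : Fin k → ℝ) :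
    1 / 20 ≤ √(roundVec g t ⬝ᵥ roundVec g t) :=
  Real.le_sqrt_of_sq_le (by linarith [le_dotProduct_self_roundVec hk g t])

/-- For `‖g‖ ≥ 1 / 5` the slope is nonpositive, and for `‖g‖ ≤ 1 / 5` the exponential factor is at
least `1`. -/
theorem threshold_slope_le (hk : 0 < k) (hγ : γ ≤ 1 / 100) (g t : Fin k → ℝ) {x : ℝ}
    (hx : x ∈ Set.Icc 0 γ) :
    (x * (γ / 2) - roundVec g t ⬝ᵥ g) / √(1 - x ^ 2) ^ 3 ≤
      √(roundVec g t ⬝ᵥ roundVec g t) * Real.exp (4 * k * (1 / 25 - g ⬝ᵥ g)) := by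
  set N := √(roundVec g t ⬝ᵥ roundVec g t)
  set G := √(g ⬝ᵥ g)
  have hG : g ⬝ᵥ g = G ^ 2 := (Real.sq_sqrt (dotProduct_self_star_nonneg g)).symm
  have hN : 1 / 20 ≤ N := sqrt_dotProduct_self_roundVec_ge hk g t
  have hxγ : x * (γ / 2) ≤ 1 / 20000 := by nlinarith [hx.1, hx.2]
  have hs : 9 / 10 ≤ √(1 - x ^ 2) := Real.le_sqrt_of_sq_le (by nlinarith [hx.1, hx.2])
  have hs3 : 1 / 2 ≤ √(1 - x ^ 2) ^ 3 :=
    le_trans (by norm_num) (pow_le_pow_left₀ (by norm_num) hs 3)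
  rw [div_le_iff₀ (by linarith), hG]
  rcases le_total (1 / 5) G with hlarge | hsmall
  · have hg := dotProduct_self_sub_le_roundVec_dotProduct hk g t
    have hneg : x * (γ / 2) - roundVec g t ⬝ᵥ g ≤ 0 := by nlinarith
    exact hneg.trans (by positivity)
  · have hcs := neg_le_of_abs_le (abs_dotProduct_le_sqrt_mul_sqrt (roundVec g t) g)
    have hexp : 1 ≤ Real.exp (4 * k * (1 / 25 - G ^ 2)) :=
      Real.one_le_exp (mul_nonneg (by positivity) (by nlinarith [Real.sqrt_nonneg (g ⬝ᵥ g)]))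
    calc x * (γ / 2) - roundVec g t ⬝ᵥ g ≤ N * 1 * (1 / 2) := by nlinarith
      _ ≤ _ := by gcongr

theorem gaussianCdf_threshold_sub_le (hk : 0 < k) (hγ : γ ≤ 1 / 100) (hα : 0 ≤ α) (hαβ : α ≤ β)
    (hβ : β ≤ γ) (p : (Fin k → ℝ) × (Fin k → ℝ)) :
    Φ (threshold γ β p) - Φ (threshold γ α p) ≤
      √k * (β - α) * Real.exp (4 * k * (1 / 25 - p.1 ⬝ᵥ p.1)) := by
  have hN := sqrt_dotProduct_self_roundVec_ge hk p.1 p.2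
  have hF := sub_mul_div_sqrt_one_sub_sq_sub_le hα hαβ hβ (by linarith)
    fun x hx ↦ threshold_slope_le hk hγ p.1 p.2 hx
  refine (gaussianCdf_sub_le_max _ _).trans (max_le ?_ ?_)
  · rw [threshold_eq hk (by nlinarith), threshold_eq hk (by nlinarith), ← mul_sub]
    refine (mul_le_mul_of_nonneg_left hF (by positivity)).trans_eq ?_
    field_simp
  · have := sub_nonneg.2 hαβ
    positivity

end Threshold

section RoundedLoss

variable {k : ℕ} {γ α β : ℝ}

theorem measurable_threshold (k : ℕ) (γ : ℝ) :
    Measurable fun z : ℝ × ((Fin k → ℝ) × (Fin k → ℝ)) ↦ threshold γ z.1 z.2 := by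
  have hh : Measurable fun z : ℝ × ((Fin k → ℝ) × (Fin k → ℝ)) ↦ roundVec z.2.1 z.2.2 :=
    measurable_roundVec.comp measurable_snd
  unfold threshold dotProduct
  fun_prop

theorem measurable_gaussianCdf_threshold (k : ℕ) (γ : ℝ) :
    Measurable fun z : ℝ × ((Fin k → ℝ) × (Fin k → ℝ)) ↦ Φ (threshold γ z.1 z.2) :=
  (monotone_cdf _).measurable.comp (measurable_threshold k γ)

theorem integrable_gaussianCdf_threshold (k : ℕ) (γ α : ℝ) :
    Integrable (fun p ↦ Φ (threshold γ α p)) (projMeasure k) :=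
  .of_bound ((measurable_gaussianCdf_threshold k γ).comp
    measurable_prodMk_left).aestronglyMeasurable 1 <| .of_forall fun p ↦ by
      rw [Real.norm_of_nonneg (cdf_nonneg _ _)]
      exact cdf_le_one _ _

theorem measurable_roundedLoss (k : ℕ) (γ : ℝ) : Measurable (roundedLoss k γ) :=
  (measurable_gaussianCdf_threshold k γ).stronglyMeasurable.integral_prod_right'.measurable

theorem roundedLoss_nonneg (k : ℕ) (γ α : ℝ) : 0 ≤ roundedLoss k γ α :=
  integral_nonneg fun _ ↦ cdf_nonneg _ _

theorem one_sub_roundedLoss_eq (k : ℕ) (γ α : ℝ) :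
    1 - roundedLoss k γ α = ∫ p, (1 - Φ (threshold γ α p)) ∂(projMeasure k) := by
  rw [integral_sub (integrable_const 1) (integrable_gaussianCdf_threshold k γ α)]
  simp [roundedLoss]

theorem roundedLoss_le_one (k : ℕ) (γ α : ℝ) : roundedLoss k γ α ≤ 1 := by
  rw [← sub_nonneg, one_sub_roundedLoss_eq]
  exact integral_nonneg fun _ ↦ sub_nonneg.2 (cdf_le_one _ _)

theorem integrable_exp_neg_mul_dotProduct_self_projMeasure {c : ℝ} (hc : 0 ≤ c) :
    Integrable (fun p ↦ Real.exp (-c * (p.1 ⬝ᵥ p.1))) (projMeasure k) := by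
  refine .of_bound (Measurable.aestronglyMeasurable ?_) 1 <| .of_forall fun p ↦ ?_
  · unfold dotProduct
    fun_prop
  · rw [Real.norm_of_nonneg (Real.exp_pos _).le, Real.exp_le_one_iff, neg_mul, neg_nonpos]
    exact mul_nonneg hc (dotProduct_self_star_nonneg p.1)

theorem integral_exp_neg_mul_dotProduct_self_projMeasure (hk : 0 < k) {c : ℝ} (hc : 0 ≤ c) :
    ∫ p, Real.exp (-(c * k) * (p.1 ⬝ᵥ p.1)) ∂(projMeasure k) = (√(1 + 2 * c))⁻¹ ^ k := by
  have hk0 : (k : ℝ) ≠ 0 := by positivity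
  rw [projMeasure, integral_fun_fst fun g : Fin k → ℝ ↦ Real.exp (-(c * k) * (g ⬝ᵥ g)),
    probReal_univ, one_smul, integral_exp_neg_mul_dotProduct_self _ (by positivity),
    Fintype.card_fin, NNReal.coe_inv, NNReal.coe_natCast]
  field_simp

theorem roundedLoss_sub_le (hk : 0 < k) (hγ : γ ≤ 1 / 100) (hα : 0 ≤ α) (hαβ : α ≤ β)
    (hβ : β ≤ γ) : roundedLoss k γ β - roundedLoss k γ α ≤ √k * (β - α) * (1 / 2) ^ k := by
  have hint := integrable_gaussianCdf_threshold k γ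
  have : 0 ≤ √k * (β - α) := mul_nonneg (Real.sqrt_nonneg _) (sub_nonneg.2 hαβ)
  have hsplit (p : (Fin k → ℝ) × (Fin k → ℝ)) :
      √k * (β - α) * Real.exp (4 * k * (1 / 25 - p.1 ⬝ᵥ p.1)) =
        √k * (β - α) * Real.exp (k * (4 / 25)) * Real.exp (-(4 * k) * (p.1 ⬝ᵥ p.1)) := by
    rw [mul_assoc _ (Real.exp _), ← Real.exp_add]
    ring_nf
  have hbase : Real.exp (4 / 25) * (√(1 + 2 * 4))⁻¹ ≤ 1 / 2 := by
    rw [show (1 + 2 * 4 : ℝ) = 3 ^ 2 by norm_num, Real.sqrt_sq (by norm_num)]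
    have := Real.exp_bound_div_one_sub_of_interval' (x := 4 / 25) (by norm_num) (by norm_num)
    linarith
  calc roundedLoss k γ β - roundedLoss k γ α
      = ∫ p, (Φ (threshold γ β p) - Φ (threshold γ α p)) ∂(projMeasure k) :=
        (integral_sub (hint β) (hint α)).symm
    _ ≤ ∫ p, √k * (β - α) * Real.exp (k * (4 / 25)) *
          Real.exp (-(4 * k) * (p.1 ⬝ᵥ p.1)) ∂(projMeasure k) :=
        integral_mono ((hint β).sub (hint α))
          ((integrable_exp_neg_mul_dotProduct_self_projMeasure (by positivity)).const_mul _)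
          fun p ↦ (gaussianCdf_threshold_sub_le hk hγ hα hαβ hβ p).trans_eq (hsplit p)
    _ = √k * (β - α) * (Real.exp (4 / 25) * (√(1 + 2 * 4))⁻¹) ^ k := by
        rw [integral_const_mul, integral_exp_neg_mul_dotProduct_self_projMeasure hk (by norm_num),
          Real.exp_nat_mul, mul_assoc, mul_pow]
    _ ≤ √k * (β - α) * (1 / 2) ^ k := by gcongr

theorem threshold_zero_le (hk : 0 < k) (hγ : γ ≤ 1 / 100) (p : (Fin k → ℝ) × (Fin k → ℝ)) :
    threshold γ 0 p ≤ √k / 10 := by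
  have hN := sqrt_dotProduct_self_roundVec_ge hk p.1 p.2
  set N := √(roundVec p.1 p.2 ⬝ᵥ roundVec p.1 p.2)
  calc threshold γ 0 p = √k / N * (γ / 2) := by
        rw [threshold_eq hk (by norm_num), zero_mul, sub_zero, zero_pow two_ne_zero, sub_zero,
          Real.sqrt_one, div_one]
    _ ≤ √k / N * (N / 10) := mul_le_mul_of_nonneg_left (by linarith) (by positivity)
    _ = √k / 10 := by field_simp

theorem neg_le_threshold_self (hk : 0 < k) (hγ0 : 0 ≤ γ) (hγ : γ ≤ 1 / 100)
    (p : (Fin k → ℝ) × (Fin k → ℝ)) :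
    -(√k / 10 * √(p.1 ⬝ᵥ p.1)) ≤ threshold γ γ p := by
  have hN := sqrt_dotProduct_self_roundVec_ge hk p.1 p.2
  have hcs := le_of_abs_le (abs_dotProduct_le_sqrt_mul_sqrt (roundVec p.1 p.2) p.1)
  rw [threshold_eq hk (by nlinarith)]
  set N := √(roundVec p.1 p.2 ⬝ᵥ roundVec p.1 p.2)
  set G := √(p.1 ⬝ᵥ p.1)
  have hNG : 0 ≤ N * G := by positivity
  have hs : 1 / 10 ≤ √(1 - γ ^ 2) := Real.le_sqrt_of_sq_le (by nlinarith)
  have hquot : -(N * G / 10) ≤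
      (γ / 2 - γ * (roundVec p.1 p.2 ⬝ᵥ p.1)) / √(1 - γ ^ 2) := by
    rw [le_div_iff₀ (by linarith)]
    have hup : γ * (roundVec p.1 p.2 ⬝ᵥ p.1) ≤ 1 / 100 * (N * G) :=
      (mul_le_mul_of_nonneg_left hcs hγ0).trans (mul_le_mul_of_nonneg_right hγ hNG)
    nlinarith
  calc -(√k / 10 * G) = √k / N * -(N * G / 10) := by field_simp
    _ ≤ _ := mul_le_mul_of_nonneg_left hquot (by positivity)

theorem exp_le_one_sub_roundedLoss_zero (hk : 0 < k) (hγ : γ ≤ 1 / 100) :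
    Real.exp (-k / 100 - 3) ≤ 1 - roundedLoss k γ 0 := by
  have hpt (p : (Fin k → ℝ) × (Fin k → ℝ)) :
      Real.exp (-k / 100 - 3) ≤ 1 - Φ (threshold γ 0 p) :=
    calc Real.exp (-k / 100 - 3) = Real.exp (-(√k / 10) ^ 2 - 3) := by
          rw [div_pow, Real.sq_sqrt (by positivity)]
          norm_num [neg_div]
      _ ≤ 1 - Φ (√k / 10) := exp_le_one_sub_gaussianCdf (by positivity)
      _ ≤ 1 - Φ (threshold γ 0 p) :=
          sub_le_sub_left (monotone_cdf _ (threshold_zero_le hk hγ p)) 1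
  rw [one_sub_roundedLoss_eq]
  simpa using integral_mono (integrable_const _)
    ((integrable_const 1).sub (integrable_gaussianCdf_threshold k γ 0)) hpt

theorem exp_le_roundedLoss_self (hk : 0 < k) (hγ0 : 0 ≤ γ) (hγ : γ ≤ 1 / 100) :
    Real.exp (-k / 100 - 3) ≤ roundedLoss k γ γ := by
  have hpt (p : (Fin k → ℝ) × (Fin k → ℝ)) :
      Real.exp (-3) * Real.exp (-(1 / 100 * k) * (p.1 ⬝ᵥ p.1)) ≤ Φ (threshold γ γ p) :=
    calc Real.exp (-3) * Real.exp (-(1 / 100 * k) * (p.1 ⬝ᵥ p.1))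
        = Real.exp (-(√k / 10 * √(p.1 ⬝ᵥ p.1)) ^ 2 - 3) := by
          rw [mul_pow, div_pow, Real.sq_sqrt (by positivity),
            Real.sq_sqrt (by exact dotProduct_self_star_nonneg p.1), ← Real.exp_add]
          ring_nf
      _ ≤ Φ (-(√k / 10 * √(p.1 ⬝ᵥ p.1))) := exp_le_gaussianCdf_neg (by positivity)
      _ ≤ Φ (threshold γ γ p) := monotone_cdf _ (neg_le_threshold_self hk hγ0 hγ p)
  have hbase : Real.exp (-(1 / 100)) ≤ (√(1 + 2 * (1 / 100)))⁻¹ := by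
    rw [Real.exp_neg]
    refine inv_anti₀ (by positivity) (Real.sqrt_le_iff.2 ⟨(Real.exp_pos _).le, ?_⟩)
    nlinarith [Real.add_one_le_exp (1 / 100 : ℝ)]
  calc Real.exp (-k / 100 - 3) = Real.exp (-3) * Real.exp (-(1 / 100)) ^ k := by
        rw [← Real.exp_nat_mul, ← Real.exp_add]
        ring_nf
    _ ≤ Real.exp (-3) * (√(1 + 2 * (1 / 100)))⁻¹ ^ k := by gcongr
    _ = ∫ p, Real.exp (-3) * Real.exp (-(1 / 100 * k) * (p.1 ⬝ᵥ p.1)) ∂(projMeasure k) := by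
        rw [integral_const_mul, integral_exp_neg_mul_dotProduct_self_projMeasure hk (by norm_num)]
    _ ≤ roundedLoss k γ γ :=
        integral_mono
          ((integrable_exp_neg_mul_dotProduct_self_projMeasure (by positivity)).const_mul _)
          (integrable_gaussianCdf_threshold k γ γ) hpt

theorem sqrt_mul_two_inv_pow_le (hγ0 : 0 ≤ γ) (hγ : γ ≤ 1 / 100) :
    √k * γ * (1 / 2) ^ k ≤ Real.exp (-k / 100 - 3) := by
  have hexp : (3 / 4 : ℝ) ≤ Real.exp (-(1 / 100)) :=
    le_trans (by norm_num) (Real.one_sub_le_exp_neg _)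
  have hexp3 : (1 / 100 : ℝ) ≤ Real.exp (-3) := by
    rw [Real.exp_neg, one_div, ← mul_one 3, ← Nat.cast_ofNat (n := 3), Real.exp_nat_mul]
    refine inv_anti₀ (by positivity) (le_trans ?_ (by norm_num : (3 : ℝ) ^ 3 ≤ 100))
    gcongr
    exact (Real.exp_one_lt_d9.trans (by norm_num)).le
  have hsqrt : √(k : ℝ) ≤ (3 / 2) ^ k := by
    refine Real.sqrt_le_iff.2 ⟨by positivity, ?_⟩
    calc (k : ℝ) ≤ 2 ^ k := mod_cast k.lt_two_pow_self.le
      _ ≤ ((3 / 2) ^ 2) ^ k := by gcongr; norm_num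
      _ = ((3 / 2) ^ k) ^ 2 := pow_right_comm _ _ _
  calc √k * γ * (1 / 2) ^ k ≤ (3 / 2) ^ k * (1 / 100) * (1 / 2) ^ k := by gcongr
    _ = (3 / 4) ^ k * (1 / 100) := by
        rw [mul_right_comm, ← mul_pow]
        norm_num
    _ ≤ Real.exp (-(1 / 100)) ^ k * Real.exp (-3) := by gcongr
    _ = Real.exp (-k / 100 - 3) := by
        rw [← Real.exp_nat_mul, ← Real.exp_add]
        ring_nf

theorem sub_div_mul_one_sub_roundedLoss_zero_le (hk : 0 < k) (hγ : γ ≤ 1 / 100) (hα : 0 < α)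
    (hαγ : α ≤ γ) : (γ - α) / γ * (1 - roundedLoss k γ 0) ≤ 1 - roundedLoss k γ α := by
  have hγ0 : 0 < γ := hα.trans_le hαγ
  have hslope := roundedLoss_sub_le hk hγ le_rfl hα.le hαγ
  have hdom : √k * γ * (1 / 2) ^ k ≤ 1 - roundedLoss k γ 0 :=
    (sqrt_mul_two_inv_pow_le hγ0.le hγ).trans (exp_le_one_sub_roundedLoss_zero hk hγ)
  calc (γ - α) / γ * (1 - roundedLoss k γ 0)
      = 1 - roundedLoss k γ 0 - α / γ * (1 - roundedLoss k γ 0) := by field_simp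
    _ ≤ 1 - roundedLoss k γ 0 - α / γ * (√k * γ * (1 / 2) ^ k) := by gcongr
    _ = 1 - roundedLoss k γ 0 - √k * (α - 0) * (1 / 2) ^ k := by field_simp; ring
    _ ≤ 1 - roundedLoss k γ α := by linarith

theorem div_mul_roundedLoss_self_le (hk : 0 < k) (hγ : γ ≤ 1 / 100) (hα : 0 < α) (hαγ : α ≤ γ) :
    α / γ * roundedLoss k γ γ ≤ roundedLoss k γ α := by
  have hγ0 : 0 < γ := hα.trans_le hαγ
  have hslope := roundedLoss_sub_le hk hγ hα.le hαγ le_rfl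
  have hdom : √k * γ * (1 / 2) ^ k ≤ roundedLoss k γ γ :=
    (sqrt_mul_two_inv_pow_le hγ0.le hγ).trans (exp_le_roundedLoss_self hk hγ0.le hγ)
  have : 0 ≤ (γ - α) / γ := div_nonneg (sub_nonneg.2 hαγ) hγ0.le
  calc α / γ * roundedLoss k γ γ
      = roundedLoss k γ γ - (γ - α) / γ * roundedLoss k γ γ := by field_simp; ring
    _ ≤ roundedLoss k γ γ - (γ - α) / γ * (√k * γ * (1 / 2) ^ k) := by gcongr
    _ = roundedLoss k γ γ - √k * (γ - α) * (1 / 2) ^ k := by field_simp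
    _ ≤ roundedLoss k γ α := by linarith

end RoundedLoss

section MarginBounds

variable {k : ℕ} {γ : ℝ}

/-- The function `φ` of the paper for the margin parameter `γ`, with the probabilities that define
it computed: the margin `α` exceeds `γ / 2` after rounding with probability
`1 - roundedLoss k γ α`. -/
def marginPhi (k : ℕ) (γ α : ℝ) : ℝ :=
  if α ≤ 0 then 1 - roundedLoss k γ α
  else if α ≤ γ then (γ - α) / γ * (1 - roundedLoss k γ 0) else 0

/-- The function `ρ` of the paper for the margin parameter `γ`, with the probabilities that define
it computed. -/
def marginRho (k : ℕ) (γ α : ℝ) : ℝ :=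
  if α ≤ 0 then 0 else if α ≤ γ then α / γ * roundedLoss k γ γ else roundedLoss k γ α

theorem measurable_marginPhi (k : ℕ) (γ : ℝ) : Measurable (marginPhi k γ) :=
  .ite measurableSet_Iic ((measurable_roundedLoss k γ).const_sub 1) <|
    .ite measurableSet_Iic (by fun_prop) measurable_const

theorem marginPhi_of_nonpos {α : ℝ} (hα : α ≤ 0) : marginPhi k γ α = 1 - roundedLoss k γ α :=
  if_pos hα

theorem marginPhi_of_lt (hγ : 0 ≤ γ) {α : ℝ} (hα : γ < α) : marginPhi k γ α = 0 := by
  rw [marginPhi, if_neg (hγ.trans_lt hα).not_ge, if_neg hα.not_ge]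

theorem marginPhi_nonneg (k : ℕ) (γ α : ℝ) : 0 ≤ marginPhi k γ α := by
  rw [marginPhi]
  split_ifs with hα hαγ
  · exact sub_nonneg.2 (roundedLoss_le_one k γ α)
  · have := roundedLoss_le_one k γ 0
    exact mul_nonneg (div_nonneg (by linarith) (by linarith)) (by linarith)
  · exact le_rfl

theorem marginPhi_le_one_sub_roundedLoss (hk : 0 < k) (hγ : γ ≤ 1 / 100) (α : ℝ) :
    marginPhi k γ α ≤ 1 - roundedLoss k γ α := by
  rw [marginPhi]
  split_ifs with hα hαγ
  · exact le_rfl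
  · exact sub_div_mul_one_sub_roundedLoss_zero_le hk hγ (not_le.1 hα) hαγ
  · exact sub_nonneg.2 (roundedLoss_le_one k γ α)

theorem marginRho_of_nonpos {α : ℝ} (hα : α ≤ 0) : marginRho k γ α = 0 := if_pos hα

theorem marginRho_of_lt (hγ : 0 ≤ γ) {α : ℝ} (hα : γ < α) :
    marginRho k γ α = roundedLoss k γ α := by
  rw [marginRho, if_neg (hγ.trans_lt hα).not_ge, if_neg hα.not_ge]

theorem marginRho_nonneg (k : ℕ) (γ α : ℝ) : 0 ≤ marginRho k γ α := by
  rw [marginRho]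
  split_ifs with hα hαγ
  · exact le_rfl
  · exact mul_nonneg (div_nonneg (by linarith) (by linarith)) (roundedLoss_nonneg k γ γ)
  · exact roundedLoss_nonneg k γ α

theorem marginRho_le_roundedLoss (hk : 0 < k) (hγ : γ ≤ 1 / 100) (α : ℝ) :
    marginRho k γ α ≤ roundedLoss k γ α := by
  rw [marginRho]
  split_ifs with hα hαγ
  · exact roundedLoss_nonneg k γ α
  · exact div_mul_roundedLoss_self_le hk hγ (not_le.1 hα) hαγ
  · exact le_rfl

end MarginBounds

section LabelledDomain

variable {d k : ℕ} {c γ : ℝ} {w : Fin (d + 1) → ℝ} {q : (Fin (d + 1) → ℝ) × ℝ}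

/-- The labelled data points `X × {-1, 1}`. -/
def labelledDomain (d : ℕ) (c : ℝ) : Set ((Fin (d + 1) → ℝ) × ℝ) :=
  {q | q.1 ∈ Xset d c ∧ (q.2 = 1 ∨ q.2 = -1)}

theorem measurableSet_labelledDomain (d : ℕ) (c : ℝ) : MeasurableSet (labelledDomain d c) := by
  have hX : MeasurableSet (Xset d c) := by
    unfold Xset
    measurability
  exact (measurable_fst hX).inter (measurable_snd ((Set.finite_singleton _).insert _).measurableSet)

theorem sum_castSucc_sq_eq_one (hw : w ∈ Hset d) : ∑ j : Fin d, w j.castSucc ^ 2 = 1 := by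
  simpa [Fin.sum_univ_castSucc, hw.2] using hw.1

theorem dotp_eq_sum_castSucc (hw : w ∈ Hset d) (x : Fin (d + 1) → ℝ) :
    dotp w x = ∑ j : Fin d, w j.castSucc * x j.castSucc := by
  rw [dotp, Fin.sum_univ_castSucc, hw.2, zero_mul, add_zero]

theorem abs_margin_le (hc : 0 ≤ c) (hw : w ∈ Hset d) (hq : q ∈ labelledDomain d c) :
    |margin w q| ≤ c := by
  have hy : |q.2| = 1 := by rcases hq.2 with h | h <;> simp [h]
  rw [margin, abs_mul, hy, one_mul, dotp_eq_sum_castSucc hw]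
  refine abs_le_of_sq_le_sq ((Finset.sum_mul_sq_le_sq_mul_sq _ _ _).trans ?_) hc
  rw [sum_castSucc_sq_eq_one hw, one_mul]
  exact hq.1.2

theorem exists_mem_labelledDomain_margin_eq (hγ : 0 ≤ γ) (hγc : γ ≤ c) (hc : c ≤ 1)
    (hw : w ∈ Hset d) : ∃ q ∈ labelledDomain d c, margin w q = γ := by
  have hsq : ∑ j : Fin d, (γ * w j.castSucc) ^ 2 = γ ^ 2 := by
    simp_rw [mul_pow, ← Finset.mul_sum, sum_castSucc_sq_eq_one hw, mul_one]
  refine ⟨(Fin.snoc (fun j ↦ γ * w j.castSucc) √(1 - γ ^ 2), 1), ⟨⟨?_, ?_⟩, .inl rfl⟩, ?_⟩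
  · simp only [Fin.sum_univ_castSucc, Fin.snoc_castSucc, Fin.snoc_last, hsq]
    rw [Real.sq_sqrt (by nlinarith), add_sub_cancel]
  · simp only [Fin.snoc_castSucc, hsq]
    gcongr
  · simp only [margin, dotp_eq_sum_castSucc hw, Fin.snoc_castSucc, one_mul, mul_left_comm _ γ,
      ← Finset.mul_sum, ← sq, sum_castSucc_sq_eq_one hw, mul_one]

theorem measureReal_roundedMargin_le_of_mem (hk : 0 < k) (hc : 0 ≤ c) (hc1 : c < 1)
    (hw : w ∈ Hset d) (hq : q ∈ labelledDomain d c) (γ : ℝ) :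
    (roundMeasure k (d + 1)).real {p | roundedMargin w q p ≤ γ / 2} =
      roundedLoss k γ (margin w q) := by
  have hunit {v : Fin (d + 1) → ℝ} (hv : ∑ j, v j ^ 2 = 1) : v ⬝ᵥ v = 1 := by
    simpa only [dotProduct, ← sq] using hv
  refine measureReal_roundedMargin_le hk (hunit hw.1) (hunit hq.1.1) (sq_eq_one_iff.2 hq.2) ?_ γ
  exact (sq_lt_one_iff_abs_lt_one _).2 ((abs_margin_le hc hw hq).trans_lt hc1)

theorem measureReal_lt_roundedMargin_of_mem (hk : 0 < k) (hc : 0 ≤ c) (hc1 : c < 1)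
    (hw : w ∈ Hset d) (hq : q ∈ labelledDomain d c) (γ : ℝ) :
    (roundMeasure k (d + 1)).real {p | γ / 2 < roundedMargin w q p} =
      1 - roundedLoss k γ (margin w q) := by
  rw [← measureReal_roundedMargin_le_of_mem hk hc hc1 hw hq, ← probReal_compl_eq_one_sub
    (measurableSet_le (measurable_roundedMargin w q) measurable_const)]
  simp only [Set.compl_ofPred, not_le]

theorem phiSpec.apply_margin {φ : ℝ → ℝ} (hφ : phiSpec d k c γ φ) (hk : 0 < k) (hc : 0 ≤ c)
    (hc1 : c < 1) (hw : w ∈ Hset d) (hq : q ∈ labelledDomain d c) :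
    φ (margin w q) = marginPhi k γ (margin w q) := by
  obtain ⟨hneg, hmid, hlarge⟩ := hφ
  have hnonpos {q} (hq : q ∈ labelledDomain d c) (hα : margin w q ≤ 0) :
      φ (margin w q) = 1 - roundedLoss k γ (margin w q) :=
    (hneg w q.1 q.2 hw hq.1 hq.2 hα).trans (measureReal_lt_roundedMargin_of_mem hk hc hc1 hw hq γ)
  rw [marginPhi]
  split_ifs with hα hαγ
  · exact hnonpos hq hα
  · obtain ⟨q₀, hq₀, h₀⟩ := exists_mem_labelledDomain_margin_eq le_rfl hc hc1.le hw
    rw [hmid _ (not_le.1 hα) hαγ, ← h₀, hnonpos hq₀ h₀.le]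
  · exact hlarge _ (not_le.1 hαγ) (abs_le.1 (abs_margin_le hc hw hq)).2

theorem rhoSpec.apply_margin {ρ : ℝ → ℝ} (hρ : rhoSpec d k c γ ρ) (hk : 0 < k) (hc1 : c < 1)
    (hγ : 0 ≤ γ) (hγc : γ ≤ c) (hw : w ∈ Hset d) (hq : q ∈ labelledDomain d c) :
    ρ (margin w q) = marginRho k γ (margin w q) := by
  obtain ⟨hlarge, hmid, hneg⟩ := hρ
  have hc : 0 ≤ c := hγ.trans hγc
  rw [marginRho]
  split_ifs with hα hαγ
  · exact hneg _ (abs_le.1 (abs_margin_le hc hw hq)).1 hα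
  · obtain ⟨q₀, hq₀, h₀⟩ := exists_mem_labelledDomain_margin_eq hγ hγc hc1.le hw
    have hloss := measureReal_roundedMargin_le_of_mem hk hc hc1 hw hq₀ γ
    rw [h₀] at hloss
    rw [← hloss]
    exact hmid _ (not_le.1 hα) hαγ w q₀.1 q₀.2 hw hq₀.1 hq₀.2 h₀
  · exact (hlarge w q.1 q.2 hw hq.1 hq.2 (not_le.1 hαγ)).trans
      (measureReal_roundedMargin_le_of_mem hk hc hc1 hw hq γ)

end LabelledDomain

section RoundingErrors

theorem integral_natCard_subtype {α ι : Type*} [MeasurableSpace α] [Fintype ι] (μ : Measure α)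
    [IsFiniteMeasure μ] {P : ι → α → Prop} (hP : ∀ r, MeasurableSet {x | P r x}) :
    ∫ x, (Nat.card {r // P r x} : ℝ) ∂μ = ∑ r, μ.real {x | P r x} := by
  classical
  have hcard (x : α) : (Nat.card {r // P r x} : ℝ) = ∑ r, {x | P r x}.indicator 1 x := by
    simp [Nat.card_eq_fintype_card, Fintype.card_subtype, Set.indicator_apply]
  simp_rw [hcard]
  rw [integral_finsetSum _ fun r _ ↦ (integrable_const 1).indicator (hP r)]
  simp_rw [integral_indicator_one (hP _)]

variable {d n k : ℕ} {c γ δ : ℝ} {D : Measure ((Fin (d + 1) → ℝ) × ℝ)}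
  {S : Fin n → (Fin (d + 1) → ℝ) × ℝ} {w : Fin (d + 1) → ℝ} {φ ρ : ℝ → ℝ}

theorem integral_measureReal_lt_roundedMargin_le (hk : 0 < k) (hc : 0 ≤ c) (hc1 : c < 1)
    (hγ : γ ≤ 1 / 100) [IsFiniteMeasure D] (hD : ∀ᵐ q ∂D, q ∈ labelledDomain d c)
    (hw : w ∈ Hset d) (hφ : phiSpec d k c γ φ) :
    ∫ p, D.real {q | γ / 2 < roundedMargin w q p ∧ margin w q ≤ 0} ∂(roundMeasure k (d + 1)) ≤
      ∫ q, φ (margin w q) ∂D := by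
  have hB : MeasurableSet {q | margin w q ≤ 0} :=
    measurableSet_le (measurable_margin w) measurable_const
  have hint : Integrable (fun q ↦ marginPhi k γ (margin w q)) D :=
    .of_bound ((measurable_marginPhi k γ).comp (measurable_margin w)).aestronglyMeasurable 1 <|
      .of_forall fun q ↦ by
        rw [Real.norm_of_nonneg (marginPhi_nonneg k γ _)]
        linarith [marginPhi_le_one_sub_roundedLoss hk hγ (margin w q),
          roundedLoss_nonneg k γ (margin w q)]
  calc ∫ p, D.real {q | γ / 2 < roundedMargin w q p ∧ margin w q ≤ 0} ∂(roundMeasure k (d + 1))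
      = ∫ q in {q | margin w q ≤ 0},
          (roundMeasure k (d + 1)).real {p | γ / 2 < roundedMargin w q p} ∂D :=
        integral_measureReal_section_and _ _
          (measurableSet_lt measurable_const (measurable_uncurry_roundedMargin w)) _
    _ = ∫ q in {q | margin w q ≤ 0}, marginPhi k γ (margin w q) ∂D := by
        refine setIntegral_congr_ae hB ?_
        filter_upwards [hD] with q hq hα
        rw [measureReal_lt_roundedMargin_of_mem hk hc hc1 hw hq, marginPhi_of_nonpos hα]
    _ ≤ ∫ q, marginPhi k γ (margin w q) ∂D :=
        setIntegral_le_integral hint (.of_forall fun q ↦ marginPhi_nonneg k γ _)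
    _ = ∫ q, φ (margin w q) ∂D := by
        refine integral_congr_ae ?_
        filter_upwards [hD] with q hq
        exact (hφ.apply_margin hk hc hc1 hw hq).symm

theorem sum_phi_div_le_integral_card (hk : 0 < k) (hc : 0 ≤ c) (hc1 : c < 1) (hγ0 : 0 ≤ γ)
    (hγ : γ ≤ 1 / 100) (hγδ : γ ≤ δ) (hS : ∀ r, S r ∈ labelledDomain d c) (hw : w ∈ Hset d)
    (hφ : phiSpec d k c γ φ) :
    (∑ r, φ (margin w (S r))) / n ≤
      ∫ p, (Nat.card {r // γ / 2 < roundedMargin w (S r) p ∧ margin w (S r) ≤ δ} : ℝ) / n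
        ∂(roundMeasure k (d + 1)) := by
  have hmeas (r : Fin n) : MeasurableSet
      {p : (Fin k → Fin (d + 1) → ℝ) × (Fin k → ℝ) |
        γ / 2 < roundedMargin w (S r) p ∧ margin w (S r) ≤ δ} :=
    (measurableSet_lt measurable_const (measurable_roundedMargin w (S r))).inter (.const _)
  rw [integral_div, integral_natCard_subtype _ hmeas]
  gcongr with r
  rw [hφ.apply_margin hk hc hc1 hw (hS r)]
  by_cases hα : margin w (S r) ≤ δ
  · simp only [hα, and_true, measureReal_lt_roundedMargin_of_mem hk hc hc1 hw (hS r)]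
    exact marginPhi_le_one_sub_roundedLoss hk hγ _
  · rw [marginPhi_of_lt hγ0 (hγδ.trans_lt (not_le.1 hα))]
    exact measureReal_nonneg

theorem integral_card_le_sum_rho_div (hk : 0 < k) (hc1 : c < 1) (hγ : 0 ≤ γ) (hγc : γ ≤ c)
    (hγδ : γ ≤ δ) (hS : ∀ r, S r ∈ labelledDomain d c) (hw : w ∈ Hset d)
    (hρ : rhoSpec d k c γ ρ) :
    ∫ p, (Nat.card {r // roundedMargin w (S r) p ≤ γ / 2 ∧ δ < margin w (S r)} : ℝ) / n
        ∂(roundMeasure k (d + 1)) ≤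
      (∑ r, ρ (margin w (S r))) / n := by
  have hmeas (r : Fin n) : MeasurableSet
      {p : (Fin k → Fin (d + 1) → ℝ) × (Fin k → ℝ) |
        roundedMargin w (S r) p ≤ γ / 2 ∧ δ < margin w (S r)} :=
    (measurableSet_le (measurable_roundedMargin w (S r)) measurable_const).inter (.const _)
  rw [integral_div, integral_natCard_subtype _ hmeas]
  gcongr with r
  rw [hρ.apply_margin hk hc1 hγ hγc hw (hS r)]
  by_cases hα : δ < margin w (S r)
  · simp only [hα, and_true,
      measureReal_roundedMargin_le_of_mem hk (hγ.trans hγc) hc1 hw (hS r)]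
    exact (marginRho_of_lt hγ (hγδ.trans_lt hα)).ge
  · simp only [hα, and_false, Set.ofPred_false, measureReal_empty]
    exact marginRho_nonneg k γ _

theorem integral_rho_le_integral_measureReal (hk : 0 < k) (hc1 : c < 1) (hγ0 : 0 ≤ γ)
    (hγc : γ ≤ c) (hγ : γ ≤ 1 / 100) [IsFiniteMeasure D]
    (hD : ∀ᵐ q ∂D, q ∈ labelledDomain d c) (hw : w ∈ Hset d) (hρ : rhoSpec d k c γ ρ) :
    ∫ q, ρ (margin w q) ∂D ≤
      ∫ p, D.real {q | roundedMargin w q p ≤ γ / 2 ∧ 0 < margin w q}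
        ∂(roundMeasure k (d + 1)) := by
  have hB : MeasurableSet {q | 0 < margin w q} :=
    measurableSet_lt measurable_const (measurable_margin w)
  have hint : Integrable (fun q ↦ roundedLoss k γ (margin w q)) D :=
    .of_bound ((measurable_roundedLoss k γ).comp (measurable_margin w)).aestronglyMeasurable 1 <|
      .of_forall fun q ↦ by
        rw [Real.norm_of_nonneg (roundedLoss_nonneg k γ _)]
        exact roundedLoss_le_one k γ _
  calc ∫ q, ρ (margin w q) ∂D = ∫ q, marginRho k γ (margin w q) ∂D := by
        refine integral_congr_ae ?_
        filter_upwards [hD] with q hq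
        exact hρ.apply_margin hk hc1 hγ0 hγc hw hq
    _ = ∫ q in {q | 0 < margin w q}, marginRho k γ (margin w q) ∂D :=
        (setIntegral_eq_integral_of_forall_compl_eq_zero fun q hq ↦
          marginRho_of_nonpos (not_lt.1 hq)).symm
    _ ≤ ∫ q in {q | 0 < margin w q}, roundedLoss k γ (margin w q) ∂D :=
        integral_mono_of_nonneg (.of_forall fun q ↦ marginRho_nonneg k γ _) hint.integrableOn
          (.of_forall fun q ↦ marginRho_le_roundedLoss hk hγ _)
    _ = ∫ q in {q | 0 < margin w q},
          (roundMeasure k (d + 1)).real {p | roundedMargin w q p ≤ γ / 2} ∂D := by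
        refine setIntegral_congr_ae hB ?_
        filter_upwards [hD] with q hq _
        exact (measureReal_roundedMargin_le_of_mem hk (hγ0.trans hγc) hc1 hw hq γ).symm
    _ = ∫ p, D.real {q | roundedMargin w q p ≤ γ / 2 ∧ 0 < margin w q}
          ∂(roundMeasure k (d + 1)) :=
        (integral_measureReal_section_and _ _
          (measurableSet_le (measurable_uncurry_roundedMargin w) measurable_const) _).symm

end RoundingErrors

theorem statement13_general {d n k : ℕ} (_hn : 1 ≤ n) (hk : 0 < k) {c γi : ℝ} (hc : c < 1)
    (hγ0 : 0 < γi) (hγc : γi ≤ c) (hγi : γi ≤ 1 / 100) {D : Measure ((Fin (d + 1) → ℝ) × ℝ)}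
    [IsFiniteMeasure D] (hD : ∀ᵐ q ∂D, q ∈ labelledDomain d c)
    {S : Fin n → (Fin (d + 1) → ℝ) × ℝ} (hS : ∀ r, S r ∈ labelledDomain d c)
    {w : Fin (d + 1) → ℝ} (hw : w ∈ Hset d) {φ ρ : ℝ → ℝ} (hφ : phiSpec d k c γi φ)
    (hρ : rhoSpec d k c γi ρ) {γ : ℝ} (hγ : γi ≤ γ) :
    (∫ p, D.real {q | γi / 2 < roundedMargin w q p ∧ margin w q ≤ 0} ∂(roundMeasure k (d + 1)) ≤
      ∫ q, φ (margin w q) ∂D) ∧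
    ((∑ r, φ (margin w (S r))) / n ≤
      ∫ p, (Nat.card {r // γi / 2 < roundedMargin w (S r) p ∧ margin w (S r) ≤ γ} : ℝ) / n
        ∂(roundMeasure k (d + 1))) ∧
    (∫ p, (Nat.card {r // roundedMargin w (S r) p ≤ γi / 2 ∧ γ < margin w (S r)} : ℝ) / n
        ∂(roundMeasure k (d + 1)) ≤ (∑ r, ρ (margin w (S r))) / n) ∧
    (∫ q, ρ (margin w q) ∂D ≤
      ∫ p, D.real {q | roundedMargin w q p ≤ γi / 2 ∧ 0 < margin w q}
        ∂(roundMeasure k (d + 1))) :=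
  have hc0 : 0 ≤ c := hγ0.le.trans hγc
  ⟨integral_measureReal_lt_roundedMargin_le hk hc0 hc hγi hD hw hφ,
    sum_phi_div_le_integral_card hk hc0 hc hγ0.le hγi hγ hS hw hφ,
    integral_card_le_sum_rho_div hk hc hγ0.le hγc hγ hS hw hρ,
    integral_rho_le_integral_measureReal hk hc hγ0.le hγc hγi hD hw hρ⟩

/-- (Remark 3.9 of the paper.) The functions `φ` and `ρ` upper and
lower bound the four rounding-error probabilities. -/
theorem statement13 : ∃ cγ : ℝ, 0 < cγ ∧ cγ ≤ (Real.sqrt 2)⁻¹ ∧ ∃ k₀ : ℕ,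
    ∀ (d n k : ℕ), 1 ≤ n → k₀ ≤ k →
    ∀ γi : ℝ, 0 < γi → γi ≤ cγ →
    ∀ D : Measure ((Fin (d+1) → ℝ) × ℝ), IsProbabilityMeasure D →
    D {p | p.1 ∈ Xset d cγ ∧ (p.2 = 1 ∨ p.2 = -1)} = 1 →
    ∀ S : Fin n → (Fin (d+1) → ℝ) × ℝ,
      (∀ r, (S r).1 ∈ Xset d cγ ∧ ((S r).2 = 1 ∨ (S r).2 = -1)) →
    ∀ w, w ∈ Hset d →
    ∀ φ ρ : ℝ → ℝ, phiSpec d k cγ γi φ → rhoSpec d k cγ γi ρ →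
    ∀ γ : ℝ, γi ≤ γ →
    ((∫ p, (D {q | γi / 2 < q.2 * ∑ r, hRound p.1 p.2 w r * ∑ s, p.1 r s * q.1 s ∧
          q.2 * dotp w q.1 ≤ 0}).toReal ∂(roundMeasure k (d+1))) ≤
      ∫ q, φ (q.2 * dotp w q.1) ∂D) ∧
    ((∑ r, φ ((S r).2 * dotp w (S r).1)) / n ≤
      ∫ p, ((Nat.card {r : Fin n // γi / 2 <
          (S r).2 * ∑ u, hRound p.1 p.2 w u * ∑ s, p.1 u s * (S r).1 s ∧
          (S r).2 * dotp w (S r).1 ≤ γ} : ℝ) / n) ∂(roundMeasure k (d+1))) ∧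
    ((∫ p, ((Nat.card {r : Fin n //
          (S r).2 * ∑ u, hRound p.1 p.2 w u * ∑ s, p.1 u s * (S r).1 s ≤ γi / 2 ∧
          γ < (S r).2 * dotp w (S r).1} : ℝ) / n) ∂(roundMeasure k (d+1))) ≤
      (∑ r, ρ ((S r).2 * dotp w (S r).1)) / n) ∧
    ((∫ q, ρ (q.2 * dotp w q.1) ∂D) ≤
      ∫ p, (D {q | q.2 * ∑ r, hRound p.1 p.2 w r * ∑ s, p.1 r s * q.1 s ≤ γi / 2 ∧
          0 < q.2 * dotp w q.1}).toReal ∂(roundMeasure k (d+1))) := by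
  refine ⟨1 / 100, by norm_num, (le_inv_comm₀ (by norm_num) (by positivity)).2
    (Real.sqrt_le_iff.2 (by norm_num)), 1, ?_⟩
  intro d n k hn hk γi hγ0 hγi D _ hD S hS w hw φ ρ hφ hρ γ hγ
  exact statement13_general hn hk (by norm_num) hγ0 hγi hγi
    ((mem_ae_iff_prob_eq_one (measurableSet_labelledDomain d _)).2 hD) hS hw hφ hρ hγ
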